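/- arXiv:hep-th/9709112 — 2 statements merged into one kernel-verified Lean document; each statement's English description precedes it below -/
import Mathlib

section
/- Let n₁, n₂ be natural numbers and let w₁ : Fin n₁ → ℝ and w₂ : Fin n₂ → ℝ take only the values +1 and −1. Suppose n₁ is even and the volume element ω₁ = e₁e₂⋯e_{n₁} of Clℝ(w₁) satisfies ω₁² = −1 (i.e. Clℝ(w₁) is a negative Clifford algebra). Then the Clifford algebra Clℝ(Sum.elim w₁ w₂ ∘ finSumFinEquiv.symm) on Fin (n₁ + n₂) → ℝ is isomorphic as an ℝ-algebra to the tensor product Clℝ(w₁) ⊗[ℝ] Clℝ(−w₂), where −w₂ is the function i ↦ −(w₂ i). -/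
open CliffordAlgebra TensorProduct

/-- The volume element `ω = e₁e₂⋯eₙ` of the Clifford algebra of the weighted
sum-of-squares form with weights `w : Fin n → ℝ`. -/
noncomputable def volumeElem {n : ℕ} (w : Fin n → ℝ) :
    CliffordAlgebra (QuadraticMap.weightedSumSquares ℝ w) :=
  ((List.finRange n).map fun i =>
    CliffordAlgebra.ι (QuadraticMap.weightedSumSquares ℝ w) (Pi.single i 1)).prod

/-!
Suppose an even element `ω` of `Cl(Q₁)` anticommutes with all vectors and squares to a unit `c`.
In `Cl(Q₁ ⊕ Q₂)` vectors `m₂` of `Q₂` anticommute with those of `Q₁` and commute with `ω`, so the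
products `c⁻¹ ω m₂` commute with `Cl(Q₁)` and square to `c⁻¹ Q₂(m₂)`: the graded tensor product
`Cl(Q₁ ⊕ Q₂)` becomes the ordinary one `Cl(Q₁) ⊗ Cl(c⁻¹ Q₂)`. The product of an orthogonal basis
of even size `n` is such an `ω` as soon as its square is a unit scalar, since moving a basis vector
past it produces `n - 1` signs.
-/

theorem list_prod_map_mul_of_forall_mul_eq_smul {κ S A : Type*} [Monoid A] [CommMonoid S]
    [MulAction S A] [IsScalarTower S A A] [SMulCommClass S A A] {f : κ → A} {ε : κ → S} {x : A}
    (h : ∀ i, f i * x = ε i • (x * f i)) (l : List κ) :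
    (l.map f).prod * x = (l.map ε).prod • (x * (l.map f).prod) := by
  induction l with
  | nil => simp
  | cons a l ih =>
    calc ((a :: l).map f).prod * x
        = (l.map ε).prod • (f a * x * (l.map f).prod) := by
          rw [List.map_cons, List.prod_cons, mul_assoc, ih, mul_smul_comm, ← mul_assoc]
      _ = ((a :: l).map ε).prod • (x * ((a :: l).map f).prod) := by
          rw [h, smul_mul_assoc, smul_smul, mul_assoc, mul_comm _ (ε a), List.map_cons,
            List.prod_cons, List.map_cons, List.prod_cons]

theorem tmul_one_add_tmul_mul_self_of_mul_eq_neg_mul {R A B : Type*} [CommRing R] [Ring A]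
    [Algebra R A] [Ring B] [Algebra R B] {a x : A} (h : x * a = -(a * x)) (b : B) :
    (a ⊗ₜ[R] 1 + x ⊗ₜ b) * (a ⊗ₜ[R] 1 + x ⊗ₜ b) = (a * a) ⊗ₜ[R] 1 + (x * x) ⊗ₜ (b * b) := by
  simp only [add_mul, mul_add, Algebra.TensorProduct.tmul_mul_tmul, one_mul, mul_one, h,
    TensorProduct.neg_tmul]
  abel

section Generators

variable {R M₁ M₂ A : Type*} [CommRing R] [AddCommGroup M₁] [Module R M₁] [AddCommGroup M₂]
  [Module R M₂] [Semiring A] [Algebra R A] {Q₁ : QuadraticForm R M₁} {Q₂ : QuadraticForm R M₂}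

theorem commute_algHom_of_forall_ι {f : CliffordAlgebra Q₁ →ₐ[R] A} {a : A}
    (h : ∀ m, Commute (f (ι Q₁ m)) a) (x : CliffordAlgebra Q₁) : Commute (f x) a := by
  induction x using CliffordAlgebra.induction with
  | algebraMap r => exact (f.commutes r).symm ▸ Algebra.commute_algebraMap_left r a
  | ι m => exact h m
  | mul x y hx hy => exact (map_mul f x y).symm ▸ hx.mul_left hy
  | add x y hx hy => exact (map_add f x y).symm ▸ hx.add_left hy

theorem commute_algHom_algHom_of_forall_ι_ι {f : CliffordAlgebra Q₁ →ₐ[R] A}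
    {g : CliffordAlgebra Q₂ →ₐ[R] A} (h : ∀ m₁ m₂, Commute (f (ι Q₁ m₁)) (g (ι Q₂ m₂)))
    (x : CliffordAlgebra Q₁) (y : CliffordAlgebra Q₂) : Commute (f x) (g y) :=
  commute_algHom_of_forall_ι
    (fun m₁ => (commute_algHom_of_forall_ι (fun m₂ => (h m₁ m₂).symm) y).symm) x

end Generators

/-- An even element of `Cl(Q)` that anticommutes with every vector and squares to the unit `c`,
like the volume element of an even-dimensional nondegenerate form. Such an element untwists the
graded tensor product of `Cl(Q)` with a second Clifford algebra. -/
structure IsTwistingElement {R M : Type*} [CommRing R] [AddCommGroup M] [Module R M]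
    (Q : QuadraticForm R M) (ω : CliffordAlgebra Q) (c : Rˣ) : Prop where
  mem_evenOdd_zero : ω ∈ evenOdd Q 0
  mul_ι : ∀ m, ω * ι Q m = -(ι Q m * ω)
  mul_self : ω * ω = (c : R) • 1

namespace IsTwistingElement

variable {R M₁ M₂ : Type*} [CommRing R] [AddCommGroup M₁] [Module R M₁] [AddCommGroup M₂]
  [Module R M₂] {Q₁ : QuadraticForm R M₁} {ω : CliffordAlgebra Q₁} {c : Rˣ}

section Relations

variable (h : IsTwistingElement Q₁ ω c) (Q₂ : QuadraticForm R M₂)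
include h

theorem map_inl_mul_ι_inl (m : M₁) :
    CliffordAlgebra.map (.inl Q₁ Q₂) ω * ι (Q₁.prod Q₂) (m, 0) =
      -(ι (Q₁.prod Q₂) (m, 0) * CliffordAlgebra.map (.inl Q₁ Q₂) ω) := by
  simpa using congrArg (CliffordAlgebra.map (.inl Q₁ Q₂)) (h.mul_ι m)

theorem commute_map_inl_ι_inr (m : M₂) :
    Commute (CliffordAlgebra.map (.inl Q₁ Q₂) ω) (ι (Q₁.prod Q₂) (0, m)) := by
  simpa using commute_map_mul_map_of_isOrtho_of_mem_evenOdd_zero_left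
    (.inl Q₁ Q₂) (.inr Q₁ Q₂) QuadraticMap.IsOrtho.inl_inr _ _ h.mem_evenOdd_zero
    (ι_mem_evenOdd_one Q₂ m)

theorem map_inl_mul_self :
    CliffordAlgebra.map (.inl Q₁ Q₂) ω * CliffordAlgebra.map (.inl Q₁ Q₂) ω =
      (c : R) • 1 := by
  rw [← map_mul, h.mul_self, map_smul, map_one]

theorem commute_ι_inl_map_inl_mul_ι_inr (m₁ : M₁) (m₂ : M₂) :
    Commute (ι (Q₁.prod Q₂) (m₁, 0))
      (CliffordAlgebra.map (.inl Q₁ Q₂) ω * ι (Q₁.prod Q₂) (0, m₂)) := by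
  have anticomm : ι (Q₁.prod Q₂) (m₁, 0) * ι _ (0, m₂) = -(ι _ (0, m₂) * ι _ (m₁, 0)) :=
    ι_mul_ι_comm_of_isOrtho (QuadraticMap.IsOrtho.inl_inr m₁ m₂)
  rw [commute_iff_eq, mul_assoc, ← neg_eq_iff_eq_neg.mpr anticomm, mul_neg, ← mul_assoc,
    ← mul_assoc, h.map_inl_mul_ι_inl, neg_mul, neg_neg]

theorem map_inl_mul_ι_inr_mul_self (m : M₂) :
    CliffordAlgebra.map (.inl Q₁ Q₂) ω * ι (Q₁.prod Q₂) (0, m) *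
        (CliffordAlgebra.map (.inl Q₁ Q₂) ω * ι (Q₁.prod Q₂) (0, m)) =
      (c : R) • algebraMap R _ (Q₂ m) := by
  rw [(h.commute_map_inl_ι_inr Q₂ m).symm.mul_mul_mul_comm, h.map_inl_mul_self, ι_sq_scalar,
    smul_one_mul, QuadraticMap.prod_apply, map_zero, zero_add]

theorem mul_self_tmul_ι_mul_self (m : M₂) :
    (ω * ω) ⊗ₜ[R] (ι ((↑c⁻¹ : R) • Q₂) m * ι ((↑c⁻¹ : R) • Q₂) m) =
      algebraMap R (CliffordAlgebra Q₁ ⊗[R] CliffordAlgebra ((↑c⁻¹ : R) • Q₂)) (Q₂ m) := by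
  rw [h.mul_self, ι_sq_scalar, smul_apply, smul_eq_mul, map_mul, ← Algebra.smul_def,
    TensorProduct.smul_tmul, smul_smul, c.mul_inv, one_smul,
    Algebra.TensorProduct.algebraMap_apply']

theorem ι_tmul_one_add_tmul_ι_mul_self (m : M₁ × M₂) :
    (ι Q₁ m.1 ⊗ₜ[R] 1 + ω ⊗ₜ ι ((↑c⁻¹ : R) • Q₂) m.2) *
        (ι Q₁ m.1 ⊗ₜ 1 + ω ⊗ₜ ι ((↑c⁻¹ : R) • Q₂) m.2) =
      algebraMap R (CliffordAlgebra Q₁ ⊗[R] CliffordAlgebra ((↑c⁻¹ : R) • Q₂)) (Q₁.prod Q₂ m) := by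
  rw [tmul_one_add_tmul_mul_self_of_mul_eq_neg_mul (h.mul_ι m.1), h.mul_self_tmul_ι_mul_self,
    ι_sq_scalar, ← Algebra.TensorProduct.algebraMap_apply, QuadraticMap.prod_apply, map_add]

theorem inv_smul_map_inl_mul_ι_inr_mul_self (m : M₂) :
    ((↑c⁻¹ : R) • (CliffordAlgebra.map (.inl Q₁ Q₂) ω * ι (Q₁.prod Q₂) (0, m))) *
        ((↑c⁻¹ : R) • (CliffordAlgebra.map (.inl Q₁ Q₂) ω * ι (Q₁.prod Q₂) (0, m))) =
      algebraMap R _ (((↑c⁻¹ : R) • Q₂) m) := by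
  rw [smul_mul_smul_comm, h.map_inl_mul_ι_inr_mul_self, smul_apply]
  simp [Algebra.algebraMap_eq_smul_one, smul_smul, mul_assoc]

end Relations

/-- The homomorphism `Cl(Q₁ ⊕ Q₂) → Cl(Q₁) ⊗ Cl(c⁻¹ Q₂)` with `(m₁, m₂) ↦ m₁ ⊗ 1 + ω ⊗ m₂`. -/
noncomputable def ofProd (h : IsTwistingElement Q₁ ω c) (Q₂ : QuadraticForm R M₂) :
    CliffordAlgebra (Q₁.prod Q₂) →ₐ[R]
      CliffordAlgebra Q₁ ⊗[R] CliffordAlgebra ((↑c⁻¹ : R) • Q₂) :=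
  CliffordAlgebra.lift _
    ⟨((TensorProduct.mk R _ _).flip 1 ∘ₗ ι Q₁).coprod
        (TensorProduct.mk R _ _ ω ∘ₗ ι ((↑c⁻¹ : R) • Q₂)),
      h.ι_tmul_one_add_tmul_ι_mul_self Q₂⟩

/-- The homomorphism `Cl(c⁻¹ Q₂) → Cl(Q₁ ⊕ Q₂)` with `m ↦ c⁻¹ ω m`, whose image commutes
with `Cl(Q₁)`. -/
noncomputable def twistedInr (h : IsTwistingElement Q₁ ω c) (Q₂ : QuadraticForm R M₂) :
    CliffordAlgebra ((↑c⁻¹ : R) • Q₂) →ₐ[R] CliffordAlgebra (Q₁.prod Q₂) :=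
  CliffordAlgebra.lift _
    ⟨(↑c⁻¹ : R) • (LinearMap.mulLeft R (CliffordAlgebra.map (.inl Q₁ Q₂) ω) ∘ₗ
        ι (Q₁.prod Q₂) ∘ₗ LinearMap.inr R M₁ M₂),
      h.inv_smul_map_inl_mul_ι_inr_mul_self Q₂⟩

section Equivalence

variable (h : IsTwistingElement Q₁ ω c) (Q₂ : QuadraticForm R M₂)

@[simp]
theorem ofProd_ι (m : M₁ × M₂) :
    h.ofProd Q₂ (ι _ m) = ι Q₁ m.1 ⊗ₜ 1 + ω ⊗ₜ ι ((↑c⁻¹ : R) • Q₂) m.2 :=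
  CliffordAlgebra.lift_ι_apply _ _ _

@[simp]
theorem twistedInr_ι (m : M₂) :
    h.twistedInr Q₂ (ι _ m) =
      (↑c⁻¹ : R) • (CliffordAlgebra.map (.inl Q₁ Q₂) ω * ι (Q₁.prod Q₂) (0, m)) :=
  CliffordAlgebra.lift_ι_apply _ _ _

theorem commute_map_inl_twistedInr (x : CliffordAlgebra Q₁)
    (y : CliffordAlgebra ((↑c⁻¹ : R) • Q₂)) :
    Commute (CliffordAlgebra.map (.inl Q₁ Q₂) x) (h.twistedInr Q₂ y) := by
  refine commute_algHom_algHom_of_forall_ι_ι (fun m₁ m₂ => ?_) x y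
  rw [map_apply_ι, twistedInr_ι]
  exact (h.commute_ι_inl_map_inl_mul_ι_inr Q₂ m₁ m₂).smul_right _

/-- The homomorphism `Cl(Q₁) ⊗ Cl(c⁻¹ Q₂) → Cl(Q₁ ⊕ Q₂)` inverse to `ofProd`. -/
noncomputable def toProd :
    CliffordAlgebra Q₁ ⊗[R] CliffordAlgebra ((↑c⁻¹ : R) • Q₂) →ₐ[R]
      CliffordAlgebra (Q₁.prod Q₂) :=
  Algebra.TensorProduct.lift (CliffordAlgebra.map (.inl Q₁ Q₂)) (h.twistedInr Q₂)
    (h.commute_map_inl_twistedInr Q₂)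

@[simp]
theorem ofProd_map_inl (x : CliffordAlgebra Q₁) :
    h.ofProd Q₂ (CliffordAlgebra.map (.inl Q₁ Q₂) x) = x ⊗ₜ 1 := by
  have : (h.ofProd Q₂).comp (CliffordAlgebra.map (.inl Q₁ Q₂)) =
      Algebra.TensorProduct.includeLeft := by
    ext m
    simp
  exact DFunLike.congr_fun this x

theorem ofProd_comp_toProd : (h.ofProd Q₂).comp (h.toProd Q₂) = AlgHom.id R _ := by
  ext m
  · simp [toProd]
  · simp [toProd, h.mul_self, TensorProduct.smul_tmul', smul_smul]

theorem toProd_comp_ofProd : (h.toProd Q₂).comp (h.ofProd Q₂) = AlgHom.id R _ := by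
  ext m
  · simp [toProd]
  · simp [toProd, ← mul_assoc, h.map_inl_mul_self, smul_smul]

/-- The isomorphism `Cl(Q₁ ⊕ Q₂) ≃ Cl(Q₁) ⊗ Cl(c⁻¹ Q₂)` given by a twisting element of `Q₁`. -/
noncomputable def prodEquivTensor :
    CliffordAlgebra (Q₁.prod Q₂) ≃ₐ[R]
      CliffordAlgebra Q₁ ⊗[R] CliffordAlgebra ((↑c⁻¹ : R) • Q₂) :=
  AlgEquiv.ofAlgHom (h.ofProd Q₂) (h.toProd Q₂) (h.ofProd_comp_toProd Q₂)
    (h.toProd_comp_ofProd Q₂)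

end Equivalence

end IsTwistingElement

/-- The product `ι (v 0) * ⋯ * ι (v (n - 1))` in `Cl(Q)`, which is the volume element when `v` is
an orthogonal basis. -/
noncomputable def vectorProd {R M : Type*} [CommRing R] [AddCommGroup M] [Module R M]
    (Q : QuadraticForm R M) {n : ℕ} (v : Fin n → M) : CliffordAlgebra Q :=
  ((List.finRange n).map fun i => ι Q (v i)).prod

section VectorProd

variable {R M : Type*} [CommRing R] [AddCommGroup M] [Module R M] {Q : QuadraticForm R M} {n : ℕ}

theorem vectorProd_mem_evenOdd (v : Fin n → M) : vectorProd Q v ∈ evenOdd Q n := by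
  simpa [vectorProd] using SetLike.list_prod_map_mem_graded (A := evenOdd Q) (List.finRange n)
    (fun _ => 1) (fun i => ι Q (v i)) fun i _ => ι_mem_evenOdd_one Q (v i)

theorem vectorProd_mul_ι {v : Fin n → M} (hv : Pairwise fun i j => Q.IsOrtho (v i) (v j))
    (j : Fin n) :
    vectorProd Q v * ι Q (v j) = (-1 : R) ^ (n + 1) • (ι Q (v j) * vectorProd Q v) := by
  have sign (i : Fin n) :
      ι Q (v i) * ι Q (v j) = (-1 * if i = j then -1 else 1 : R) • (ι Q (v j) * ι Q (v i)) := by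
    rcases eq_or_ne i j with rfl | hij
    · simp
    · simp [hij, ι_mul_ι_comm_of_isOrtho (hv hij)]
  have prod_sign : ((List.finRange n).map fun i => (-1 * if i = j then -1 else 1 : R)).prod =
      (-1) ^ (n + 1) := by
    rw [← Fin.prod_univ_def, Finset.prod_mul_distrib]
    simp [pow_succ]
  rw [vectorProd, list_prod_map_mul_of_forall_mul_eq_smul sign, prod_sign]

theorem isTwistingElement_vectorProd (b : Module.Basis (Fin n) R M)
    (hb : Pairwise fun i j => Q.IsOrtho (b i) (b j)) (hn : Even n) {c : Rˣ}
    (hc : vectorProd Q b ^ 2 = (c : R) • 1) : IsTwistingElement Q (vectorProd Q b) c where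
  mem_evenOdd_zero := by
    simpa [(ZMod.natCast_eq_zero_iff_even).mpr hn] using vectorProd_mem_evenOdd (Q := Q) b
  mul_ι := by
    suffices LinearMap.mulLeft R (vectorProd Q b) ∘ₗ ι Q =
        -(LinearMap.mulRight R (vectorProd Q b) ∘ₗ ι Q) from DFunLike.congr_fun this
    refine b.ext fun j => ?_
    simpa [hn.add_one.neg_one_pow] using vectorProd_mul_ι hb j
  mul_self := by rw [← sq, hc]

end VectorProd

section WeightedSumSquares

open QuadraticMap (weightedSumSquares)

variable {R κ κ₁ κ₂ : Type*} [CommSemiring R] [Fintype κ] [Fintype κ₁] [Fintype κ₂]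

theorem weightedSumSquares_isOrtho_single [DecidableEq κ] (w : κ → R) {i j : κ} (hij : i ≠ j)
    (a b : R) : (weightedSumSquares R w).IsOrtho (Pi.single i a) (Pi.single j b) := by
  simp only [QuadraticMap.IsOrtho, QuadraticMap.weightedSumSquares_apply, Pi.add_apply,
    ← Finset.sum_add_distrib]
  refine Finset.sum_congr rfl fun k _ => ?_
  rcases eq_or_ne k i with rfl | hki
  · simp [hij]
  · simp [hki]

theorem weightedSumSquares_smul (a : R) (w : κ → R) :
    weightedSumSquares R (a • w) = a • weightedSumSquares R w := by
  ext v
  simp [Finset.mul_sum, mul_assoc]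

/-- Splitting coordinates along `e : κ₁ ⊕ κ₂ ≃ κ` splits a sum of squares orthogonally. -/
def weightedSumSquaresSumEquiv (e : κ₁ ⊕ κ₂ ≃ κ) (w₁ : κ₁ → R) (w₂ : κ₂ → R) :
    (weightedSumSquares R (Sum.elim w₁ w₂ ∘ e.symm)).IsometryEquiv
      ((weightedSumSquares R w₁).prod (weightedSumSquares R w₂)) where
  toLinearEquiv := (LinearEquiv.funCongrLeft R R e).trans
    (LinearEquiv.sumArrowLequivProdArrow κ₁ κ₂ R R)
  map_app' x := by
    simp [QuadraticMap.weightedSumSquares_apply, ← e.sum_comp, LinearEquiv.funCongrLeft,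
      LinearMap.funLeft]

end WeightedSumSquares

theorem volumeElem_eq_vectorProd {n : ℕ} (w : Fin n → ℝ) :
    volumeElem w = vectorProd (QuadraticMap.weightedSumSquares ℝ w) (Pi.basisFun ℝ (Fin n)) := by
  simp [volumeElem, vectorProd]

theorem cliffordAlgebra_sum_of_negative_general {R : Type*} [CommRing R] {n₁ n₂ : ℕ}
    (w₁ : Fin n₁ → R) (w₂ : Fin n₂ → R) (hn₁ : Even n₁) (c : Rˣ)
    (hω : vectorProd (QuadraticMap.weightedSumSquares R w₁) (Pi.basisFun R (Fin n₁)) ^ 2 =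
      (c : R) • 1) :
    Nonempty
      (CliffordAlgebra
          (QuadraticMap.weightedSumSquares R (Sum.elim w₁ w₂ ∘ finSumFinEquiv.symm)) ≃ₐ[R]
        CliffordAlgebra (QuadraticMap.weightedSumSquares R w₁) ⊗[R]
          CliffordAlgebra (QuadraticMap.weightedSumSquares R ((↑c⁻¹ : R) • w₂))) := by
  have twisting : IsTwistingElement (QuadraticMap.weightedSumSquares R w₁) _ c :=
    isTwistingElement_vectorProd (Pi.basisFun R (Fin n₁))
      (fun i j hij => by simpa using weightedSumSquares_isOrtho_single w₁ hij 1 1) hn₁ hω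
  rw [weightedSumSquares_smul]
  exact ⟨(equivOfIsometry (weightedSumSquaresSumEquiv finSumFinEquiv w₁ w₂)).trans
    (twisting.prodEquivTensor _)⟩

/-- Karoubi's theorem, negative case: if `n₁` is even and the volume element of
`Clℝ(w₁)` squares to `-1`, then `Clℝ(w₁ ⊕ w₂) ≅ Clℝ(w₁) ⊗[ℝ] Clℝ(-w₂)`. -/
theorem cliffordAlgebra_sum_of_negative (n₁ n₂ : ℕ) (w₁ : Fin n₁ → ℝ) (w₂ : Fin n₂ → ℝ)
    (hw₁ : ∀ i, w₁ i = 1 ∨ w₁ i = -1) (hw₂ : ∀ i, w₂ i = 1 ∨ w₂ i = -1)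
    (hn₁ : Even n₁) (hω : volumeElem w₁ ^ 2 = -1) :
    Nonempty
      (CliffordAlgebra
          (QuadraticMap.weightedSumSquares ℝ (Sum.elim w₁ w₂ ∘ finSumFinEquiv.symm)) ≃ₐ[ℝ]
        CliffordAlgebra (QuadraticMap.weightedSumSquares ℝ w₁) ⊗[ℝ]
          CliffordAlgebra (QuadraticMap.weightedSumSquares ℝ (fun i => -(w₂ i)))) := by
  have neg_eq : (fun i => -(w₂ i)) = (↑(-1 : ℝˣ)⁻¹ : ℝ) • w₂ := by ext; simp
  rw [volumeElem_eq_vectorProd] at hω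
  rw [neg_eq]
  exact cliffordAlgebra_sum_of_negative_general w₁ w₂ hn₁ (-1) (by simpa using hω)
end

section
/- For every natural number n, the complex Clifford algebra Cℂ(n+2) is isomorphic as a ℂ-algebra to the matrix algebra Matrix (Fin 2) (Fin 2) (Cℂ(n)) of 2 × 2 matrices with entries in Cℂ(n). (Paper's Theorem 3.) -/
/-- `Cℂ(n)`: the Clifford algebra over `ℂ` of the sum-of-squares form on `Fin n → ℂ`. -/
noncomputable abbrev ComplexClifford (n : ℕ) :=
  CliffordAlgebra (QuadraticMap.weightedSumSquares ℂ (fun _ : Fin n => (1 : ℂ)))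

/-!
Adding a hyperbolic plane `(a, b) ↦ a * b` to a quadratic form `Q` replaces its Clifford algebra by
the `2 × 2` matrices over it, over any commutative ring. In one direction, the matrix
`!![ι m, a; b, -ι m]` squares to `a * b + Q m`. In the other, the null vectors `u = (1, 0)` and
`v = (0, 1)` satisfy `u * v + v * u = 1`, so that `!![u * v, u; v, v * u]` is a system of matrix
units; it commutes with the copy of `CliffordAlgebra Q` generated by the `ι m * (u * v - v * u)`.
Over `ℂ` the form `x ^ 2 + y ^ 2 = (x - I * y) * (x + I * y)` is a hyperbolic plane.
-/

section MatrixUnits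

/-- `e` is a system of matrix units of `A` indexed by `n`: its entries multiply like the standard
basis `Matrix.single i j 1` of a matrix algebra. -/
structure IsMatrixUnits {n A : Type*} [Fintype n] [DecidableEq n] [Semiring A]
    (e : Matrix n n A) : Prop where
  mul_apply (i j k l : n) : e i j * e k l = if j = k then e i l else 0
  trace_eq_one : e.trace = 1

variable {R n A B : Type*} [Fintype n] [DecidableEq n] [CommSemiring R] [Semiring A] [Algebra R A]
  [Semiring B] [Algebra R B] {e : Matrix n n A}

namespace IsMatrixUnits

theorem mul_sum_map_mul (he : IsMatrixUnits e) {φ : B →ₐ[R] A}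
    (hφ : ∀ i j b, Commute (e i j) (φ b)) (b : B) (i j : n) (N : Matrix n n B) :
    φ b * e i j * ∑ k, ∑ l, φ (N k l) * e k l = ∑ l, φ (b * N j l) * e i l := by
  have mul_entry (k l : n) : φ b * e i j * (φ (N k l) * e k l) =
      if j = k then φ (b * N k l) * e i l else 0 := by
    rw [(hφ i j (N k l)).mul_mul_mul_comm, he.mul_apply, map_mul, mul_ite, mul_zero]
  simp only [Finset.mul_sum, mul_entry]
  rw [Finset.sum_comm]
  simp

/-- The algebra homomorphism out of a matrix algebra that is `φ` on the coefficients and sends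
`Matrix.single i j 1` to `e i j`. -/
def liftMatrix (he : IsMatrixUnits e) (φ : B →ₐ[R] A) (hφ : ∀ i j b, Commute (e i j) (φ b)) :
    Matrix n n B →ₐ[R] A :=
  AlgHom.ofLinearMap
    { toFun := fun M => ∑ i, ∑ j, φ (M i j) * e i j
      map_add' := fun M N => by
        simp only [Matrix.add_apply, map_add, add_mul, Finset.sum_add_distrib]
      map_smul' := fun r M => by
        simp only [Matrix.smul_apply, map_smul, smul_mul_assoc, Finset.smul_sum, RingHom.id_apply] }
    (by simpa [Matrix.one_apply, apply_ite φ, Matrix.trace] using he.trace_eq_one)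
    (fun M N => by
      simp only [LinearMap.coe_mk, AddHom.coe_mk, Finset.sum_mul, he.mul_sum_map_mul hφ,
        Matrix.mul_apply, map_sum]
      exact Finset.sum_congr rfl fun i _ => Finset.sum_comm)

theorem liftMatrix_apply (he : IsMatrixUnits e) (φ : B →ₐ[R] A)
    (hφ : ∀ i j b, Commute (e i j) (φ b)) (M : Matrix n n B) :
    he.liftMatrix φ hφ M = ∑ i, ∑ j, φ (M i j) * e i j := rfl

end IsMatrixUnits

end MatrixUnits

section HyperbolicPair

/-- The relations between the two null vectors of a hyperbolic plane in its Clifford algebra. -/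
structure IsHyperbolicPair {A : Type*} [Ring A] (u v : A) : Prop where
  mul_self_left : u * u = 0
  mul_self_right : v * v = 0
  anticomm : u * v + v * u = 1

namespace IsHyperbolicPair

variable {A : Type*} [Ring A] {u v : A}

theorem symm (h : IsHyperbolicPair u v) : IsHyperbolicPair v u :=
  ⟨h.mul_self_right, h.mul_self_left, by rw [add_comm, h.anticomm]⟩

theorem mul_mul_self (h : IsHyperbolicPair u v) : u * v * u = u := by
  rw [eq_sub_of_add_eq h.anticomm, sub_mul, one_mul, mul_assoc, h.mul_self_left, mul_zero, sub_zero]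

theorem isMatrixUnits (h : IsHyperbolicPair u v) : IsMatrixUnits !![u * v, u; v, v * u] where
  mul_apply i j k l := by
    have huvu : u * (v * u) = u := by rw [← mul_assoc, h.mul_mul_self]
    have hvuv : v * (u * v) = v := by rw [← mul_assoc, h.symm.mul_mul_self]
    have huuv : u * (u * v) = 0 := by rw [← mul_assoc, h.mul_self_left, zero_mul]
    have hvvu : v * (v * u) = 0 := by rw [← mul_assoc, h.mul_self_right, zero_mul]
    fin_cases i <;> fin_cases j <;> fin_cases k <;> fin_cases l <;>
      simp [mul_assoc, h.mul_self_left, h.mul_self_right, huvu, hvuv, huuv, hvvu]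
  trace_eq_one := by simpa [Matrix.trace_fin_two] using h.anticomm

theorem mul_commutator (h : IsHyperbolicPair u v) : u * (u * v - v * u) = -u := by
  rw [mul_sub, ← mul_assoc, ← mul_assoc, h.mul_self_left, zero_mul, h.mul_mul_self, zero_sub]

theorem commutator_mul (h : IsHyperbolicPair u v) : (u * v - v * u) * u = u := by
  rw [sub_mul, h.mul_mul_self, mul_assoc, h.mul_self_left, mul_zero, sub_zero]

theorem commutator_mul_self (h : IsHyperbolicPair u v) :
    (u * v - v * u) * (u * v - v * u) = 1 := by
  have commutator_mul_right : (u * v - v * u) * v = -v := by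
    rw [← neg_sub, neg_mul, h.symm.commutator_mul]
  rw [mul_sub, ← mul_assoc, ← mul_assoc, h.commutator_mul, commutator_mul_right, neg_mul,
    sub_neg_eq_add, h.anticomm]

theorem commute_mul_commutator_left (h : IsHyperbolicPair u v) {x : A}
    (hxu : x * u = -(u * x)) : Commute u (x * (u * v - v * u)) := by
  rw [commute_iff_eq, mul_assoc, h.commutator_mul, ← mul_assoc, ← neg_eq_iff_eq_neg.mpr hxu,
    neg_mul, mul_assoc, h.mul_commutator, mul_neg, neg_neg]

theorem commute_mul_commutator_right (h : IsHyperbolicPair u v) {x : A}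
    (hxv : x * v = -(v * x)) : Commute v (x * (u * v - v * u)) := by
  rw [← neg_sub, mul_neg]
  exact (h.symm.commute_mul_commutator_left hxv).neg_right

theorem mul_commutator_mul_self (h : IsHyperbolicPair u v) {x : A}
    (hxu : x * u = -(u * x)) (hxv : x * v = -(v * x)) :
    x * (u * v - v * u) * (x * (u * v - v * u)) = x * x := by
  have commute_commutator : Commute (u * v - v * u) x := by
    have hxuv : x * (u * v) = u * v * x := by
      rw [← mul_assoc, hxu, neg_mul, mul_assoc, hxv, mul_neg, neg_neg, mul_assoc]
    have hxvu : x * (v * u) = v * u * x := by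
      rw [← mul_assoc, hxv, neg_mul, mul_assoc, hxu, mul_neg, neg_neg, mul_assoc]
    rw [commute_iff_eq, sub_mul, mul_sub, hxuv, hxvu]
  rw [commute_commutator.mul_mul_mul_comm, h.commutator_mul_self, mul_one]

end IsHyperbolicPair

end HyperbolicPair

section HyperbolicPlane

open CliffordAlgebra

theorem commute_cliffordAlgebra_lift {R M A : Type*} [CommRing R] [AddCommGroup M] [Module R M]
    {Q : QuadraticForm R M} [Ring A] [Algebra R A] {a : A}
    (f : {f : M →ₗ[R] A // ∀ m, f m * f m = algebraMap R A (Q m)}) (hf : ∀ m, Commute a (f.1 m))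
    (b : CliffordAlgebra Q) : Commute a (lift Q f b) := by
  induction b using CliffordAlgebra.induction with
  | algebraMap r => rw [AlgHom.commutes]; exact (Algebra.commutes r a).symm
  | ι m => rw [lift_ι_apply]; exact hf m
  | mul b c hb hc => rw [map_mul]; exact hb.mul_right hc
  | add b c hb hc => rw [map_add]; exact hb.add_right hc

/-- The hyperbolic plane over `R`, in coordinates along its two null lines. -/
def hyperbolicPlane (R : Type*) [CommRing R] : QuadraticForm R (R × R) :=
  QuadraticMap.linMulLin (LinearMap.fst R R R) (LinearMap.snd R R R)

variable {R M : Type*} [CommRing R] [AddCommGroup M] [Module R M] (Q : QuadraticForm R M)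

@[simp]
theorem hyperbolicPlane_apply (p : R × R) : hyperbolicPlane R p = p.1 * p.2 := rfl

namespace hyperbolicPlane

/-- The matrices representing the vectors of `hyperbolicPlane R ⊕ Q`; they satisfy the Clifford
relations by `generatorMatrix_mul_self`. -/
def generatorMatrix : (R × R) × M →ₗ[R] Matrix (Fin 2) (Fin 2) (CliffordAlgebra Q) where
  toFun x := !![ι Q x.2, algebraMap R _ x.1.1; algebraMap R _ x.1.2, -ι Q x.2]
  map_add' x y := by simp [add_comm]
  map_smul' r x := by simp [Algebra.smul_def r (algebraMap R (CliffordAlgebra Q) _)]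

theorem generatorMatrix_apply (x : (R × R) × M) :
    generatorMatrix Q x =
      !![ι Q x.2, algebraMap R _ x.1.1; algebraMap R _ x.1.2, -ι Q x.2] :=
  rfl

theorem generatorMatrix_mul_self (x : (R × R) × M) :
    generatorMatrix Q x * generatorMatrix Q x =
      algebraMap R _ ((hyperbolicPlane R).prod Q x) := by
  have hcomm (r : R) : ι Q x.2 * algebraMap R _ r = r • ι Q x.2 := by
    rw [← Algebra.commutes, Algebra.smul_def]
  ext i j
  fin_cases i <;> fin_cases j <;>
    simp [generatorMatrix_apply, Matrix.algebraMap_matrix_apply, hcomm,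
      Algebra.smul_def _ (algebraMap R (CliffordAlgebra Q) _), ← map_mul, ← map_add, mul_comm,
      add_comm]

/-- The matrix representation of the Clifford algebra of `hyperbolicPlane R ⊕ Q`. -/
def toMatrix : CliffordAlgebra ((hyperbolicPlane R).prod Q) →ₐ[R]
    Matrix (Fin 2) (Fin 2) (CliffordAlgebra Q) :=
  lift _ ⟨generatorMatrix Q, generatorMatrix_mul_self Q⟩

theorem toMatrix_ι (x : (R × R) × M) :
    toMatrix Q (ι _ x) =
      !![ι Q x.2, algebraMap R _ x.1.1; algebraMap R _ x.1.2, -ι Q x.2] :=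
  lift_ι_apply _ _ _

/-- The first null vector, represented by the matrix unit `!![0, 1; 0, 0]`. -/
def raising : CliffordAlgebra ((hyperbolicPlane R).prod Q) := ι _ ((1, 0), 0)

/-- The second null vector, represented by the matrix unit `!![0, 0; 1, 0]`. -/
def lowering : CliffordAlgebra ((hyperbolicPlane R).prod Q) := ι _ ((0, 1), 0)

theorem toMatrix_raising : toMatrix Q (raising Q) = !![0, 1; 0, 0] := by
  simp [raising, toMatrix_ι]

theorem toMatrix_lowering : toMatrix Q (lowering Q) = !![0, 0; 1, 0] := by
  simp [lowering, toMatrix_ι]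

theorem isHyperbolicPair_raising_lowering : IsHyperbolicPair (raising Q) (lowering Q) where
  mul_self_left := by simp [raising]
  mul_self_right := by simp [lowering]
  anticomm := by simp [raising, lowering, ι_mul_ι_add_swap, QuadraticMap.polar]

theorem ι_inr_mul_raising (m : M) :
    ι _ (0, m) * raising Q = -(raising Q * ι _ (0, m)) :=
  ι_mul_ι_comm_of_isOrtho (.inr_inl _ _)

theorem ι_inr_mul_lowering (m : M) :
    ι _ (0, m) * lowering Q = -(lowering Q * ι _ (0, m)) :=
  ι_mul_ι_comm_of_isOrtho (.inr_inl _ _)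

theorem ι_eq_add (a b : R) (m : M) :
    ι ((hyperbolicPlane R).prod Q) ((a, b), m) =
      ι _ (0, m) + a • raising Q + b • lowering Q := by
  simp [raising, lowering, ← map_smul, ← map_add]

/-- The copy of `CliffordAlgebra Q` that `toMatrix` represents by scalar matrices. The inclusion of
`Q` is not that copy, as it anticommutes with the two null vectors; twisting it by their commutator
makes it commute with them. -/
def twistedInclusion : CliffordAlgebra Q →ₐ[R] CliffordAlgebra ((hyperbolicPlane R).prod Q) :=
  lift Q ⟨LinearMap.mulRight R (raising Q * lowering Q - lowering Q * raising Q) ∘ₗ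
    ι _ ∘ₗ LinearMap.inr R (R × R) M, fun m => by
      simpa using (isHyperbolicPair_raising_lowering Q).mul_commutator_mul_self
        (ι_inr_mul_raising Q m) (ι_inr_mul_lowering Q m)⟩

theorem twistedInclusion_ι (m : M) :
    twistedInclusion Q (ι Q m) =
      ι _ (0, m) * (raising Q * lowering Q - lowering Q * raising Q) :=
  lift_ι_apply _ _ _

theorem commute_raising_twistedInclusion (b : CliffordAlgebra Q) :
    Commute (raising Q) (twistedInclusion Q b) :=
  commute_cliffordAlgebra_lift _ (fun m => (isHyperbolicPair_raising_lowering Q)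
    |>.commute_mul_commutator_left (ι_inr_mul_raising Q m)) b

theorem commute_lowering_twistedInclusion (b : CliffordAlgebra Q) :
    Commute (lowering Q) (twistedInclusion Q b) :=
  commute_cliffordAlgebra_lift _ (fun m => (isHyperbolicPair_raising_lowering Q)
    |>.commute_mul_commutator_right (ι_inr_mul_lowering Q m)) b

theorem toMatrix_twistedInclusion (b : CliffordAlgebra Q) :
    toMatrix Q (twistedInclusion Q b) = Matrix.scalar (Fin 2) b := by
  have comp_eq : (toMatrix Q).comp (twistedInclusion Q) = Matrix.scalarAlgHom (Fin 2) R := by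
    ext m i j
    fin_cases i <;> fin_cases j <;>
      simp [twistedInclusion_ι, toMatrix_ι, toMatrix_raising, toMatrix_lowering]
  exact DFunLike.congr_fun comp_eq b

/-- The inverse of `toMatrix`, given by the matrix units built from the two null vectors. -/
def ofMatrix : Matrix (Fin 2) (Fin 2) (CliffordAlgebra Q) →ₐ[R]
    CliffordAlgebra ((hyperbolicPlane R).prod Q) :=
  (isHyperbolicPair_raising_lowering Q).isMatrixUnits.liftMatrix (twistedInclusion Q)
    fun i j b => by
      have hr := commute_raising_twistedInclusion Q b
      have hl := commute_lowering_twistedInclusion Q b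
      fin_cases i <;> fin_cases j
      exacts [hr.mul_left hl, hr, hl, hl.mul_left hr]

theorem ofMatrix_apply (N : Matrix (Fin 2) (Fin 2) (CliffordAlgebra Q)) :
    ofMatrix Q N =
      twistedInclusion Q (N 0 0) * (raising Q * lowering Q) +
        twistedInclusion Q (N 0 1) * raising Q +
      (twistedInclusion Q (N 1 0) * lowering Q +
        twistedInclusion Q (N 1 1) * (lowering Q * raising Q)) := by
  simp [ofMatrix, IsMatrixUnits.liftMatrix_apply, Fin.sum_univ_two]

theorem toMatrix_comp_ofMatrix : (toMatrix Q).comp (ofMatrix Q) = AlgHom.id R _ := by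
  ext N i j
  fin_cases i <;> fin_cases j <;>
    simp [ofMatrix_apply, toMatrix_twistedInclusion, toMatrix_raising, toMatrix_lowering,
      Matrix.scalar_apply, Matrix.mul_apply]

theorem ofMatrix_toMatrix_ι (x : (R × R) × M) : ofMatrix Q (toMatrix Q (ι _ x)) = ι _ x := by
  obtain ⟨⟨a, b⟩, m⟩ := x
  have twist_twice : twistedInclusion Q (ι Q m) *
      (raising Q * lowering Q - lowering Q * raising Q) = ι _ (0, m) := by
    rw [twistedInclusion_ι, mul_assoc,
      (isHyperbolicPair_raising_lowering Q).commutator_mul_self, mul_one]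
  rw [toMatrix_ι, ofMatrix_apply, ι_eq_add, ← twist_twice]
  simp only [Matrix.of_apply, Matrix.cons_val', Matrix.cons_val_zero, Matrix.cons_val_one,
    Matrix.cons_val_fin_one, AlgHom.commutes, map_neg, neg_mul, mul_sub, Algebra.smul_def]
  abel

theorem ofMatrix_comp_toMatrix : (ofMatrix Q).comp (toMatrix Q) = AlgHom.id R _ :=
  hom_ext <| LinearMap.ext <| ofMatrix_toMatrix_ι Q

/-- The Clifford algebra of `hyperbolicPlane R ⊕ Q` as the `2 × 2` matrices over that of `Q`. -/
def cliffordProdEquivMatrix : CliffordAlgebra ((hyperbolicPlane R).prod Q) ≃ₐ[R]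
    Matrix (Fin 2) (Fin 2) (CliffordAlgebra Q) :=
  AlgEquiv.ofAlgHom (toMatrix Q) (ofMatrix Q) (toMatrix_comp_ofMatrix Q) (ofMatrix_comp_toMatrix Q)

end hyperbolicPlane

end HyperbolicPlane

section SumSquares

variable {R : Type*} [CommRing R] {n : ℕ}

/-- The substitution `a * x₀ ^ 2 - a * d ^ 2 * x₁ ^ 2 = a * (x₀ - d * x₁) * (x₀ + d * x₁)`, where
`a = w 0`; its inverse is the adjugate divided by the determinant `2 * a * d`. -/
def weightedSumSquaresEquivHyperbolicProd (w : Fin (n + 2) → R) {c d : R}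
    (hw : w 1 = -(w 0 * d ^ 2)) (hc : 2 * w 0 * d * c = 1) :
    (QuadraticMap.weightedSumSquares R w).IsometryEquiv
      ((hyperbolicPlane R).prod
        (QuadraticMap.weightedSumSquares R fun i : Fin n => w i.succ.succ)) where
  toFun x := ((w 0 * (x 0 - d * x 1), x 0 + d * x 1), fun i => x i.succ.succ)
  invFun y := Fin.cons (c * d * (y.1.1 + w 0 * y.1.2))
    (Fin.cons (c * (w 0 * y.1.2 - y.1.1)) y.2)
  map_add' x y := by ext <;> simp <;> ring
  map_smul' r x := by ext <;> simp <;> ring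
  left_inv x := by
    ext i
    refine Fin.cases ?_ (Fin.cases ?_ fun j => ?_) i
    · change c * d * (w 0 * (x 0 - d * x 1) + w 0 * (x 0 + d * x 1)) = x 0
      linear_combination x 0 * hc
    · change c * (w 0 * (x 0 + d * x 1) - w 0 * (x 0 - d * x 1)) = x 1
      linear_combination x 1 * hc
    · rfl
  right_inv y := by
    refine Prod.ext (Prod.ext ?_ ?_) rfl
    · change w 0 * (c * d * (y.1.1 + w 0 * y.1.2) - d * (c * (w 0 * y.1.2 - y.1.1))) = y.1.1
      linear_combination y.1.1 * hc
    · change c * d * (y.1.1 + w 0 * y.1.2) + d * (c * (w 0 * y.1.2 - y.1.1)) = y.1.2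
      linear_combination y.1.2 * hc
  map_app' x := by
    simp only [QuadraticMap.prod_apply, hyperbolicPlane_apply, smul_eq_mul,
      QuadraticMap.weightedSumSquares_apply, Fin.sum_univ_succ, Fin.succ_zero_eq_one, hw]
    ring

theorem complexClifford_add_two_isomorphic_matrix_general (w : Fin (n + 2) → R) {d : R}
    (hw : w 1 = -(w 0 * d ^ 2)) (hd : IsUnit (2 * w 0 * d)) :
    Nonempty (CliffordAlgebra (QuadraticMap.weightedSumSquares R w) ≃ₐ[R]
      Matrix (Fin 2) (Fin 2)
        (CliffordAlgebra (QuadraticMap.weightedSumSquares R fun i : Fin n => w i.succ.succ))) := by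
  obtain ⟨c, hc⟩ := hd.exists_right_inv
  exact ⟨(CliffordAlgebra.equivOfIsometry (weightedSumSquaresEquivHyperbolicProd w hw hc)).trans
    (hyperbolicPlane.cliffordProdEquivMatrix _)⟩

end SumSquares

/-- Paper's Theorem 3: `Cℂ(n+2) ≅ M₂(Cℂ(n))`. -/
theorem complexClifford_add_two_isomorphic_matrix (n : ℕ) :
    Nonempty
      (ComplexClifford (n + 2) ≃ₐ[ℂ]
        Matrix (Fin 2) (Fin 2) (ComplexClifford n)) :=
  complexClifford_add_two_isomorphic_matrix_general (fun _ => 1) (d := Complex.I) (by simp)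
    (by simp)
end
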